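/- Let (X, μ) be a median algebra. Assume there exists a median embedding f : [0,1]ʳ → X, where [0,1]ʳ carries the coordinatewise median (each coordinate being the middle value of the three real numbers), such that the image by f of every edge of [0,1]ʳ is convex in X. Then the image of f is convex in X. -/

import Mathlib

/-- A median on a set `X` (the median algebra axioms). -/
def IsMedianAlgebra {X : Type*} (m : X → X → X → X) : Prop :=
  (∀ a b c, m a b c = m b a c) ∧
  (∀ a b c, m a b c = m b c a) ∧
  (∀ a b, m a a b = a) ∧
  (∀ a b c d e, m a b (m c d e) = m (m a b c) (m a b d) e)
/-- The interval `I(a, b) = {c | μ(a,b,c) = c}`. -/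
def mInterval {X : Type*} (m : X → X → X → X) (a b : X) : Set X := {c | m a b c = c}
/-- A subset `C` is convex if `I(a,b) ⊆ C` for all `a, b ∈ C`. -/
def MConvex {X : Type*} (m : X → X → X → X) (C : Set X) : Prop :=
  ∀ a ∈ C, ∀ b ∈ C, mInterval m a b ⊆ C
/-- The median (middle value) of three real numbers. -/
noncomputable def rmed (a b c : ℝ) : ℝ := min (max a b) (min (max b c) (max a c))

/-- The coordinate median of three elements of `[0,1]`. -/
noncomputable def imed (a b c : unitInterval) : unitInterval :=
  ⟨rmed a.1 b.1 c.1, by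
    constructor
    · simp only [rmed, le_min_iff, le_max_iff]
      exact ⟨Or.inl a.2.1, Or.inl b.2.1, Or.inl a.2.1⟩
    · exact min_le_of_left_le (max_le a.2.2 b.2.2)⟩

/-!
Every `x` in a bounded lattice is the median of `⊥`, `⊤` and `x`, so the image of a map `f`
preserving medians lies in `I(f ⊥, f ⊤)`. Intervals are convex, so it is enough that the image
fills this one. If `I(f ⊥, f a)` and `I(f ⊥, f b)` lie in the image, then so does
`I(f ⊥, f (a ⊔ b))`, because `a ⊔ b` is the median of `a`, `b` and `⊤`, and `μ(f ⊥, c, ·)`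
distributes over medians. In a cube, the edges at `⊥` supply such intervals, and the join of their
far ends is `⊤`.
-/

open Set

namespace IsMedianAlgebra

variable {X : Type*} {m : X → X → X → X} (hm : IsMedianAlgebra m)

include hm

theorem left_comm (a b c : X) : m a b c = m b a c := hm.1 a b c

theorem rotate (a b c : X) : m a b c = m b c a := hm.2.1 a b c

theorem right_comm (a b c : X) : m a b c = m a c b := by
  rw [hm.left_comm a b c, hm.rotate b a c]

theorem self_left (a b : X) : m a a b = a := hm.2.2.1 a b

theorem self_right (a b : X) : m a b b = b := by
  rw [hm.rotate, hm.self_left]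

theorem self_outer (a b : X) : m a b a = a := by
  rw [hm.right_comm, hm.self_left]

theorem distrib (a b c d e : X) : m a b (m c d e) = m (m a b c) (m a b d) e :=
  hm.2.2.2 a b c d e

theorem median_mem_mInterval (a b c : X) : m a b c ∈ mInterval m a b := by
  change m a b (m a b c) = m a b c
  rw [hm.distrib, hm.self_outer, hm.self_right]

theorem mInterval_self (a : X) : mInterval m a a = {a} := by
  ext c
  rw [mInterval, mem_ofPred_eq, hm.self_left, mem_singleton_iff, eq_comm]

theorem mConvex_mInterval (a b : X) : MConvex m (mInterval m a b) := by
  intro x (hx : m a b x = x) y (hy : m a b y = y) c (hc : m x y c = c)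
  calc
    m a b c = m a b (m x y c) := by rw [hc]
    _ = m (m a b x) (m a b y) c := hm.distrib a b x y c
    _ = c := by rw [hx, hy, hc]

theorem mInterval_median_subset {S : Set X}
    (hS : ∀ x ∈ S, ∀ y ∈ S, ∀ z ∈ S, m x y z ∈ S) {o a b u : X} (hu : u ∈ S)
    (ha : mInterval m o a ⊆ S) (hb : mInterval m o b ⊆ S) :
    mInterval m o (m a b u) ⊆ S := by
  intro c (hc : m o (m a b u) c = c)
  have hc_eq : m (m o a c) (m o b c) u = c := by
    rw [hm.right_comm o a, hm.right_comm o b, ← hm.distrib, hm.right_comm, hc]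
  rw [← hc_eq]
  exact hS _ (ha (hm.median_mem_mInterval o a c)) _ (hb (hm.median_mem_mInterval o b c)) _ hu

end IsMedianAlgebra

/-- The median of three elements of a lattice, written as a meet of joins as in `rmed`. In a
distributive lattice it equals the dual expression `(a ⊓ b) ⊔ (b ⊓ c) ⊔ (a ⊓ c)`. -/
def latticeMedian {L : Type*} [Lattice L] (a b c : L) : L :=
  (a ⊔ b) ⊓ ((b ⊔ c) ⊓ (a ⊔ c))

theorem latticeMedian_bot_top {L : Type*} [Lattice L] [BoundedOrder L] (a : L) :
    latticeMedian ⊥ ⊤ a = a := by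
  simp [latticeMedian]

theorem latticeMedian_top_right {L : Type*} [Lattice L] [OrderTop L] (a b : L) :
    latticeMedian a b ⊤ = a ⊔ b := by
  simp [latticeMedian]

theorem latticeMedian_pi_unitInterval {ι : Type*} (x y z : ι → unitInterval) :
    latticeMedian x y z = fun i => imed (x i) (y i) (z i) :=
  rfl

section BoundedLattice

variable {X L : Type*} [Lattice L] [BoundedOrder L] {m : X → X → X → X} {f : L → X}
  (hf : ∀ x y z, f (latticeMedian x y z) = m (f x) (f y) (f z))

include hf

theorem range_subset_mInterval_bot_top : range f ⊆ mInterval m (f ⊥) (f ⊤) := by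
  rintro _ ⟨x, rfl⟩
  change m (f ⊥) (f ⊤) (f x) = f x
  rw [← hf, latticeMedian_bot_top]

theorem mInterval_sup_subset_range (hm : IsMedianAlgebra m) {a b : L}
    (ha : mInterval m (f ⊥) (f a) ⊆ range f) (hb : mInterval m (f ⊥) (f b) ⊆ range f) :
    mInterval m (f ⊥) (f (a ⊔ b)) ⊆ range f := by
  have range_closed : ∀ x ∈ range f, ∀ y ∈ range f, ∀ z ∈ range f, m x y z ∈ range f := by
    rintro _ ⟨x, rfl⟩ _ ⟨y, rfl⟩ _ ⟨z, rfl⟩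
    exact ⟨latticeMedian x y z, hf x y z⟩
  rw [← latticeMedian_top_right, hf]
  exact hm.mInterval_median_subset range_closed (mem_range_self ⊤) ha hb

theorem mConvex_range_of_finset_sup_eq_top (hm : IsMedianAlgebra m) {ι : Type*} {s : Finset ι}
    {e : ι → L} (hsup : s.sup e = ⊤)
    (he : ∀ i ∈ s, mInterval m (f ⊥) (f (e i)) ⊆ range f) : MConvex m (range f) := by
  have hbot : mInterval m (f ⊥) (f ⊥) ⊆ range f := by
    rw [hm.mInterval_self, singleton_subset_iff]
    exact mem_range_self ⊥
  have htop : mInterval m (f ⊥) (f ⊤) ⊆ range f := by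
    rw [← hsup]
    exact Finset.sup_induction (p := fun a => mInterval m (f ⊥) (f a) ⊆ range f) hbot
      (fun _ ha _ hb => mInterval_sup_subset_range hf hm ha hb) he
  rw [(range_subset_mInterval_bot_top hf).antisymm htop]
  exact hm.mConvex_mInterval (f ⊥) (f ⊤)

end BoundedLattice

theorem finset_univ_sup_update_bot_top {ι : Type*} [Fintype ι] [DecidableEq ι] {L : ι → Type*}
    [∀ i, SemilatticeSup (L i)] [∀ i, BoundedOrder (L i)] :
    Finset.univ.sup (fun i => Function.update (⊥ : ∀ i, L i) i ⊤) = ⊤ := by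
  refine top_le_iff.mp fun i => ?_
  simpa using Finset.le_sup (f := fun i => Function.update (⊥ : ∀ i, L i) i ⊤)
    (Finset.mem_univ i) i

theorem image_of_cube_convex_general {X ι : Type*} [Finite ι] {L : ι → Type*}
    [∀ i, Lattice (L i)] [∀ i, BoundedOrder (L i)] {m : X → X → X → X}
    (hm : IsMedianAlgebra m) {f : (∀ i, L i) → X}
    (hf : ∀ x y z, f (latticeMedian x y z) = m (f x) (f y) (f z))
    (hedge : ∀ i, MConvex m (f '' {t | ∀ j, j ≠ i → t j = ⊥})) :
    MConvex m (range f) := by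
  classical
  have := Fintype.ofFinite ι
  refine mConvex_range_of_finset_sup_eq_top hf hm finset_univ_sup_update_bot_top fun i _ => ?_
  have bot_mem : f ⊥ ∈ f '' {t | ∀ j, j ≠ i → t j = ⊥} := mem_image_of_mem f fun _ _ => rfl
  have end_mem : f (Function.update ⊥ i ⊤) ∈ f '' {t | ∀ j, j ≠ i → t j = ⊥} :=
    mem_image_of_mem f fun _ hj => Function.update_of_ne hj _ _
  exact (hedge i _ bot_mem _ end_mem).trans (image_subset_range _ _)

/-- If a median embedding of `[0,1]ʳ` into a median algebra sends every edge of the cube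
to a convex subset, then its image is convex. -/
theorem image_of_cube_convex {X : Type*} (m : X → X → X → X)
    (hmed : IsMedianAlgebra m) (r : ℕ)
    (f : (Fin r → unitInterval) → X)
    (hfinj : Function.Injective f)
    (hfmed : ∀ x y z : Fin r → unitInterval,
      f (fun i => imed (x i) (y i) (z i)) = m (f x) (f y) (f z))
    (hedge : ∀ (i : Fin r) (v : Fin r → unitInterval), (∀ j, v j = 0 ∨ v j = 1) →
      MConvex m (f '' {t | ∀ j, j ≠ i → t j = v j})) :
    MConvex m (Set.range f) :=
  image_of_cube_convex_general hmed
    (fun x y z => by rw [latticeMedian_pi_unitInterval, hfmed])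
    fun i => hedge i 0 fun _ => Or.inl rfl
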